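/- A right artinian ring R is right self-injective if and only if ψ(M) = 0 for every finitely generated right R-module M. -/

import Mathlib

open Module Function

universe u

variable (R : Type u) [Ring R]

/-- A finitely generated right `R`-module, encoded as a module over `Rᵐᵒᵖ`. -/
structure FGMod where
  carrier : Type u
  [isAddCommGroup : AddCommGroup carrier]
  [isModule : Module Rᵐᵒᵖ carrier]
  [isFinite : Module.Finite Rᵐᵒᵖ carrier]

attribute [instance] FGMod.isAddCommGroup FGMod.isModule FGMod.isFinite

instance : CoeSort (FGMod R) (Type u) := ⟨FGMod.carrier⟩

variable {R}

/-- Isomorphism of f.g. right modules. -/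
def FGMod.Iso (M N : FGMod R) : Prop := Nonempty (M ≃ₗ[Rᵐᵒᵖ] N)

/-- Direct sum. -/
def FGMod.prod (M N : FGMod R) : FGMod R := ⟨M × N⟩

/-- `M^k`, the direct sum of `k` copies of `M`. -/
def FGMod.pow (M : FGMod R) (k : ℕ) : FGMod R := ⟨Fin k → M⟩

/-- `N` is (isomorphic to) a direct summand of `M`. -/
def FGMod.IsSummand (N M : FGMod R) : Prop :=
  ∃ A B : Submodule Rᵐᵒᵖ M, IsCompl A B ∧ Nonempty (N ≃ₗ[Rᵐᵒᵖ] A)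

/-- `M` is indecomposable. -/
def FGMod.Indec (M : FGMod R) : Prop :=
  Nontrivial M ∧ ∀ A B : Submodule Rᵐᵒᵖ M, IsCompl A B → A = ⊥ ∨ B = ⊥

/-- `M` is projective. -/
def FGMod.Proj (M : FGMod R) : Prop := Module.Projective Rᵐᵒᵖ M

/-- `f : P → M` is a projective cover: `P` projective, `f` surjective with superfluous kernel. -/
def IsProjCover (M P : FGMod R) (f : P →ₗ[Rᵐᵒᵖ] M) : Prop :=
  P.Proj ∧ Surjective f ∧ ∀ N : Submodule Rᵐᵒᵖ P, N ⊔ LinearMap.ker f = ⊤ → N = ⊤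

/-- `N` is a (first) syzygy of `M`: the kernel of a projective cover of `M`. -/
def IsSyzygy (M N : FGMod R) : Prop :=
  ∃ (P : FGMod R) (f : P →ₗ[Rᵐᵒᵖ] M),
    IsProjCover M P f ∧ Nonempty (N ≃ₗ[Rᵐᵒᵖ] LinearMap.ker f)

/-- `N` is an `n`-th syzygy of `M`. -/
def IsSyzygyN : ℕ → FGMod R → FGMod R → Prop
  | 0, M, N => M.Iso N
  | n+1, M, N => ∃ L, IsSyzygy M L ∧ IsSyzygyN n L N

/-- `M` has projective dimension at most `n`. -/
def HasPdLE : ℕ → FGMod R → Prop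
  | 0, M => M.Proj
  | n+1, M => M.Proj ∨ ∃ N, IsSyzygy M N ∧ HasPdLE n N

/-- `M` has finite projective dimension. -/
def FinPd (M : FGMod R) : Prop := ∃ n, HasPdLE n M

/-- The projective dimension of `M` (junk value if infinite). -/
noncomputable def pdIT (M : FGMod R) : ℕ := sInf {n | HasPdLE n M}

variable (R)

/-- The Igusa–Todorov relations in the free abelian group on f.g. right modules:
`[A] - [B] - [C]` whenever `A ≅ B ⊕ C`, and `[P]` for `P` projective. -/
def ITRel : Set (FreeAbelianGroup (FGMod R)) :=
  {x | ∃ A B C : FGMod R, Nonempty (A ≃ₗ[Rᵐᵒᵖ] (B × C : Type u)) ∧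
        x = FreeAbelianGroup.of A - FreeAbelianGroup.of B - FreeAbelianGroup.of C} ∪
  {x | ∃ P : FGMod R, P.Proj ∧ x = FreeAbelianGroup.of P}

/-- The Igusa–Todorov group `K`. -/
def ITK := FreeAbelianGroup (FGMod R) ⧸ AddSubgroup.closure (ITRel R)

noncomputable instance : AddCommGroup (ITK R) :=
  QuotientAddGroup.Quotient.addCommGroup _

/-- The class `[M]` in `K`. -/
noncomputable def ITcls (M : FGMod R) : ITK R := QuotientAddGroup.mk (FreeAbelianGroup.of M)

/-- `⟨M⟩`: the subgroup of `K` generated by the indecomposable non-projective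
direct summands of `M`. -/
noncomputable def ITgen (M : FGMod R) : AddSubgroup (ITK R) :=
  AddSubgroup.closure
    {x | ∃ N : FGMod R, N.IsSummand M ∧ N.Indec ∧ ¬N.Proj ∧ x = ITcls R N}

/-- The rank of a subgroup of `K`. -/
noncomputable def rkIT (H : AddSubgroup (ITK R)) : ℕ :=
  Module.finrank ℤ (AddSubgroup.toIntSubmodule H)

/-- `OmK` is a syzygy endomorphism of `K`: a group endomorphism sending `[M]` to `[ΩM]`. -/
def IsSyzygyEnd (OmK : AddMonoid.End (ITK R)) : Prop :=
  ∀ M N : FGMod R, IsSyzygy M N → OmK (ITcls R M) = ITcls R N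

/-- The Igusa–Todorov function `φ`: the least `n` such that the rank of
`Ω^i⟨M⟩` equals that of `Ω^n⟨M⟩` for all `i ≥ n`. -/
noncomputable def phiIT (OmK : AddMonoid.End (ITK R)) (M : FGMod R) : ℕ :=
  sInf {n | ∀ i, n ≤ i →
    rkIT R ((ITgen R M).map ((OmK ^ i : AddMonoid.End (ITK R)) : ITK R →+ ITK R))
      = rkIT R ((ITgen R M).map ((OmK ^ n : AddMonoid.End (ITK R)) : ITK R →+ ITK R))}

/-- The second Igusa–Todorov function `ψ`. -/
noncomputable def psiIT (OmK : AddMonoid.End (ITK R)) (M : FGMod R) : ℕ :=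
  phiIT R OmK M + sSup {d | ∃ N X : FGMod R, IsSyzygyN (phiIT R OmK M) M N ∧
      X.IsSummand N ∧ FinPd X ∧ d = pdIT X}

/-- The socle of a module: the sum of its simple submodules. -/
def socleIT (M : FGMod R) : Submodule Rᵐᵒᵖ M :=
  sSup {S : Submodule Rᵐᵒᵖ M | IsSimpleModule Rᵐᵒᵖ S}

/-!
When `R` is self-injective, maps into projectives extend along injections. Hence modules of finite
projective dimension are projective, and by the dual of Schanuel's lemma a module is determined up
to projective summands by its syzygy. Krull–Schmidt cancellation turns an equality `[A] = [B]` in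
the Igusa–Todorov group into a stable isomorphism, so the syzygy endomorphism `Ω` is injective and
preserves ranks.

When `R` is not self-injective, Baer's criterion and a pushout give a non-split extension
`0 → R → E → T → 0` with `T` simple. A syzygy of `T` is then a kernel of a projective presentation
of `E`, so `Ω[E] = Ω[T]`, and `φ(E ⊕ T) = 0` forces `n[E] = n[T]` for some `n > 0`. Cancellation
makes the non-projective module `T` a direct summand of `E`, which contradicts non-splitness.
-/

section LocalEndomorphismRing

variable {S : Type*} [Ring S] {C : Type*} [AddCommGroup C] [Module S C]

theorem isUnit_or_isNilpotent_of_indecomposable [IsArtinian S C] [IsNoetherian S C]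
    (hC : ∀ A B : Submodule S C, IsCompl A B → A = ⊥ ∨ B = ⊥) (f : Module.End S C) :
    IsUnit f ∨ IsNilpotent f := by
  obtain ⟨n, hn⟩ := Filter.eventually_atTop.mp f.eventually_isCompl_ker_pow_range_pow
  rcases hC _ _ (hn (n + 1) n.le_succ) with hker | hrange
  · refine .inl ((isUnit_pow_iff n.succ_ne_zero).mp ((Module.End.isUnit_iff _).mpr ?_))
    exact IsArtinian.bijective_of_injective_endomorphism _ (LinearMap.ker_eq_bot.mp hker)
  · exact .inr ⟨n + 1, LinearMap.range_eq_bot.mp hrange⟩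

theorem isLocalRing_of_isUnit_or_isNilpotent [Nontrivial S]
    (h : ∀ a : S, IsUnit a ∨ IsNilpotent a) : IsLocalRing S where
  isUnit_or_isUnit_of_add_one := fun {a b} hab => by
    refine (em (IsUnit a)).imp_right fun ha => ?_
    have hb : IsUnit (1 - b) → False := fun hu => ha (by rwa [← hab, add_sub_cancel_right] at hu)
    exact (h b).resolve_right fun hnil => hb hnil.isUnit_one_sub

theorem isLocalRing_end_of_indecomposable [Nontrivial C] [IsArtinian S C] [IsNoetherian S C]
    (hC : ∀ A B : Submodule S C, IsCompl A B → A = ⊥ ∨ B = ⊥) :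
    IsLocalRing (Module.End S C) :=
  isLocalRing_of_isUnit_or_isNilpotent (isUnit_or_isNilpotent_of_indecomposable hC)

theorem isUnit_of_mul_eq_one_of_isLocalRing [IsLocalRing S] {a b : S} (hab : a * b = 1) :
    IsUnit a := by
  have hidem : b * a * (b * a) = b * a := by rw [mul_assoc, ← mul_assoc a, hab, one_mul]
  rcases IsLocalRing.isUnit_or_isUnit_of_add_one (add_sub_cancel (b * a) 1) with hu | hu
  · have hba : b * a = 1 := hu.mul_left_cancel (by rw [hidem, mul_one])
    exact ⟨⟨a, b, hab, hba⟩, rfl⟩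
  · have hba : b * a = 0 := hu.mul_left_cancel (by rw [sub_mul, hidem, one_mul, sub_self, mul_zero])
    have hone : (1 : S) = a * (b * a) * b := by rw [← mul_assoc a, hab, one_mul, hab]
    exact absurd (by rw [hone, hba, mul_zero, zero_mul]) (one_ne_zero (α := S))

theorem isUnit_of_isUnit_mul_of_isLocalRing [IsLocalRing S] {a b : S} (h : IsUnit (a * b)) :
    IsUnit a := by
  obtain ⟨c, hc⟩ := h.exists_right_inv
  exact isUnit_of_mul_eq_one_of_isLocalRing ((mul_assoc a b c).symm.trans hc)

end LocalEndomorphismRing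

section Cancellation

variable {S : Type*} [Ring S] {A B C : Type*} [AddCommGroup A] [Module S A]
  [AddCommGroup B] [Module S B] [AddCommGroup C] [Module S C]

open LinearMap in
theorem nonempty_linearEquiv_of_isUnit_fst (e : (C × A) ≃ₗ[S] (C × B))
    (he : IsUnit (fst S C B ∘ₗ e.toLinearMap ∘ₗ inl S C A : Module.End S C)) :
    Nonempty (B ≃ₗ[S] A) := by
  have hbij : Bijective fun c => (e (c, 0)).1 := (Module.End.isUnit_iff _).mp he
  let g : B →ₗ[S] A := snd S C A ∘ₗ e.symm.toLinearMap ∘ₗ inr S C B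
  refine ⟨.ofBijective g ⟨(injective_iff_map_eq_zero g).mpr fun b hb => ?_, fun a => ?_⟩⟩
  · obtain ⟨c, hc⟩ : ∃ c, e.symm (0, b) = (c, 0) := ⟨_, Prod.ext rfl hb⟩
    have hec : e (c, 0) = (0, b) := by rw [← hc, e.apply_symm_apply]
    have hc0 : c = 0 := hbij.1 (by simp only [hec, Prod.mk_zero_zero, map_zero, Prod.fst_zero])
    rw [hc0, Prod.mk_zero_zero, map_zero] at hec
    exact (congrArg Prod.snd hec).symm
  · obtain ⟨c, hc⟩ := hbij.2 (-(e (0, a)).1)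
    have heca : e (c, a) = (0, (e (c, a)).2) := by
      refine Prod.ext ?_ rfl
      rw [← zero_add a, ← add_zero c, ← Prod.mk_add_mk, map_add, Prod.fst_add]
      exact (congrArg (· + _) hc).trans (neg_add_cancel _)
    exact ⟨(e (c, a)).2, congrArg Prod.snd (e.symm_apply_eq.mpr heca.symm)⟩

open LinearMap in
theorem nonempty_linearEquiv_of_prod [IsLocalRing (Module.End S C)]
    (e : (C × A) ≃ₗ[S] (C × B)) : Nonempty (B ≃ₗ[S] A) := by
  let a : Module.End S C := fst S C B ∘ₗ e.toLinearMap ∘ₗ inl S C A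
  let a' : Module.End S C := fst S C A ∘ₗ e.symm.toLinearMap ∘ₗ inl S C B
  let b : A →ₗ[S] C := fst S C B ∘ₗ e.toLinearMap ∘ₗ inr S C A
  let c : C →ₗ[S] A := snd S C A ∘ₗ e.symm.toLinearMap ∘ₗ inl S C B
  have hadd : ∀ x y, a x + b y = (e (x, y)).1 := fun x y => by
    change (e (x, 0)).1 + (e (0, y)).1 = _
    rw [← Prod.fst_add, ← map_add, Prod.mk_add_mk, add_zero, zero_add]
  have hone : a * a' + b ∘ₗ c = 1 := LinearMap.ext fun x =>
    (hadd _ _).trans (congrArg Prod.fst (e.apply_symm_apply (x, 0)))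
  by_cases ha : IsUnit a
  · exact nonempty_linearEquiv_of_isUnit_fst e ha
  · -- A shear of `C × A` replaces the corner `a` of `e` by `a + b ∘ c`, which is a unit.
    have hbc : IsUnit (b ∘ₗ c : Module.End S C) :=
      (IsLocalRing.isUnit_or_isUnit_of_add_one hone).resolve_left
        (mt isUnit_of_isUnit_mul_of_isLocalRing ha)
    have habc : IsUnit (a + b ∘ₗ c) :=
      (IsLocalRing.isUnit_or_isUnit_of_isUnit_add
        (by rwa [add_neg_cancel_comm] : IsUnit (a + b ∘ₗ c + -a))).resolve_right
        (mt (IsUnit.neg_iff a).mp ha)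
    let shear : (C × A) ≃ₗ[S] (C × A) := (LinearEquiv.refl S C).skewProd (.refl S A) c
    refine nonempty_linearEquiv_of_isUnit_fst (shear.trans e) ?_
    convert habc using 1
    ext x
    change (e (x, 0 + c x)).1 = a x + b (c x)
    rw [zero_add, hadd]

end Cancellation

section FiberProduct

variable {S : Type*} [Ring S] {K L M P Q : Type*} [AddCommGroup K] [Module S K]
  [AddCommGroup L] [Module S L] [AddCommGroup M] [Module S M] [AddCommGroup P] [Module S P]
  [AddCommGroup Q] [Module S Q]

/-- The fibre product (pullback) of two linear maps with common codomain. -/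
def fiberProduct (f : P →ₗ[S] M) (g : Q →ₗ[S] M) : Submodule S (P × Q) :=
  LinearMap.eqLocus (f ∘ₗ LinearMap.fst S P Q) (g ∘ₗ LinearMap.snd S P Q)

/-- The projection of a fibre product to its first factor. -/
def fiberProductFst (f : P →ₗ[S] M) (g : Q →ₗ[S] M) : fiberProduct f g →ₗ[S] P :=
  LinearMap.fst S P Q ∘ₗ (fiberProduct f g).subtype

theorem fiberProductFst_surjective (f : P →ₗ[S] M) {g : Q →ₗ[S] M} (hg : Surjective g) :
    Surjective (fiberProductFst f g) := fun x =>
  let ⟨y, hy⟩ := hg (f x)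
  ⟨⟨(x, y), hy.symm⟩, rfl⟩

theorem exists_exact_fiberProductFst (f : P →ₗ[S] M) {g : Q →ₗ[S] M} {j : L →ₗ[S] Q}
    (hj : Injective j) (hjg : Exact j g) :
    ∃ k : L →ₗ[S] fiberProduct f g, Injective k ∧ Exact k (fiberProductFst f g) := by
  let k : L →ₗ[S] fiberProduct f g := (LinearMap.inr S P Q ∘ₗ j).codRestrict _ fun x =>
    (map_zero f).trans (hjg.apply_apply_eq_zero x).symm
  have hk : Injective k := fun x y hxy => hj (congrArg (fun z => z.1.2) hxy)
  refine ⟨k, hk, fun ⟨⟨x, y⟩, hxy⟩ => ⟨fun hx => ?_, ?_⟩⟩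
  · obtain rfl : x = 0 := hx
    obtain ⟨z, rfl⟩ := (hjg y).mp (hxy.symm.trans (map_zero f))
    exact ⟨z, rfl⟩
  · rintro ⟨z, hz⟩
    exact (congrArg (fun w => w.1.1) hz).symm

theorem fiberProduct_equiv_of_projective [Module.Projective S P] (f : P →ₗ[S] M)
    {g : Q →ₗ[S] M} {j : L →ₗ[S] Q} (hj : Injective j) (hjg : Exact j g) (hg : Surjective g) :
    Nonempty (fiberProduct f g ≃ₗ[S] (L × P)) := by
  obtain ⟨k, hk, hkf⟩ := exists_exact_fiberProductFst f hj hjg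
  obtain ⟨l, hl⟩ := Module.projective_lifting_property _ LinearMap.id
    (fiberProductFst_surjective f hg)
  exact ⟨(hkf.splitSurjectiveEquiv hk ⟨l, hl⟩).1⟩

theorem fiberProduct_comm (f : P →ₗ[S] M) (g : Q →ₗ[S] M) :
    Nonempty (fiberProduct f g ≃ₗ[S] fiberProduct g f) :=
  ⟨(LinearEquiv.prodComm S P Q).ofSubmodules _ _ <| by
    ext ⟨y, x⟩
    exact ⟨fun ⟨_, hz, heq⟩ => heq ▸ hz.symm, fun h => ⟨(x, y), h.symm, rfl⟩⟩⟩

theorem schanuel [Module.Projective S P] [Module.Projective S Q]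
    {i : K →ₗ[S] P} {f : P →ₗ[S] M} {j : L →ₗ[S] Q} {g : Q →ₗ[S] M}
    (hi : Injective i) (hif : Exact i f) (hf : Surjective f)
    (hj : Injective j) (hjg : Exact j g) (hg : Surjective g) :
    Nonempty ((K × Q) ≃ₗ[S] (L × P)) := by
  obtain ⟨e₁⟩ := fiberProduct_equiv_of_projective g hi hif hf
  obtain ⟨e₂⟩ := fiberProduct_comm g f
  obtain ⟨e₃⟩ := fiberProduct_equiv_of_projective f hj hjg hg
  exact ⟨e₁.symm.trans (e₂.trans e₃)⟩

end FiberProduct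

section Pushout

variable {S : Type*} [Ring S] {L I J A B : Type*} [AddCommGroup L] [Module S L]
  [AddCommGroup I] [Module S I] [AddCommGroup J] [Module S J] [AddCommGroup A] [Module S A]
  [AddCommGroup B] [Module S B]

/-- The pushout (amalgamated sum) of two linear maps with common domain. -/
abbrev Pushout (i : L →ₗ[S] I) (j : L →ₗ[S] J) : Type _ :=
  (I × J) ⧸ LinearMap.range (i.prod (-j))

/-- The first coprojection into a pushout. -/
def pushoutInl (i : L →ₗ[S] I) (j : L →ₗ[S] J) : I →ₗ[S] Pushout i j :=
  (LinearMap.range (i.prod (-j))).mkQ ∘ₗ LinearMap.inl S I J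

theorem pushoutInl_injective (i : L →ₗ[S] I) {j : L →ₗ[S] J} (hj : Injective j) :
    Injective (pushoutInl i j) := by
  refine (injective_iff_map_eq_zero _).mpr fun x hx => ?_
  obtain ⟨y, hy⟩ := (Submodule.Quotient.mk_eq_zero _).mp hx
  obtain rfl : y = 0 := hj (by simpa using congrArg Prod.snd hy)
  exact (congrArg Prod.fst hy).symm.trans (map_zero i)

theorem exists_exact_pushoutInl (i : L →ₗ[S] I) {j : L →ₗ[S] J} {q : J →ₗ[S] B}
    (hjq : Exact j q) (hq : Surjective q) :
    ∃ p : Pushout i j →ₗ[S] B, Exact (pushoutInl i j) p ∧ Surjective p := by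
  have hle : LinearMap.range (i.prod (-j)) ≤ LinearMap.ker (q ∘ₗ LinearMap.snd S I J) := by
    rintro _ ⟨x, rfl⟩
    simp [hjq.apply_apply_eq_zero]
  refine ⟨Submodule.liftQ _ _ hle, fun z => ⟨fun hz => ?_, ?_⟩, fun b => ?_⟩
  · obtain ⟨⟨x, y⟩, rfl⟩ := Submodule.mkQ_surjective _ z
    obtain ⟨w, rfl⟩ := (hjq y).mp hz
    refine ⟨x + i w, (Submodule.Quotient.eq _).mpr (LinearMap.mem_range.mpr ⟨w, ?_⟩)⟩
    simp
  · rintro ⟨x, rfl⟩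
    exact map_zero q
  · obtain ⟨y, rfl⟩ := hq b
    exact ⟨Submodule.mkQ _ (0, y), rfl⟩

theorem exists_pushoutInl_retraction_iff (i : L →ₗ[S] I) (j : L →ₗ[S] J) :
    (∃ l, l ∘ₗ pushoutInl i j = .id) ↔ ∃ h : J →ₗ[S] I, h ∘ₗ j = i := by
  constructor
  · rintro ⟨l, hl⟩
    refine ⟨l ∘ₗ Submodule.mkQ _ ∘ₗ LinearMap.inr S I J, LinearMap.ext fun x => ?_⟩
    have hglue : Submodule.mkQ (LinearMap.range (i.prod (-j))) (0, j x) = pushoutInl i j (i x) :=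
      (Submodule.Quotient.eq _).mpr (LinearMap.mem_range.mpr ⟨-x, by simp⟩)
    exact (congrArg l hglue).trans (LinearMap.congr_fun hl (i x))
  · rintro ⟨h, rfl⟩
    refine ⟨Submodule.liftQ _ (LinearMap.fst S I J + h ∘ₗ LinearMap.snd S I J) ?_, ?_⟩
    · rintro _ ⟨x, rfl⟩
      simp
    · ext x
      simp [pushoutInl]

theorem pushout_equiv_of_extension {i : L →ₗ[S] I} {j : L →ₗ[S] J} {q : J →ₗ[S] B}
    (hj : Injective j) (hjq : Exact j q) (hq : Surjective q) (hext : ∃ h : J →ₗ[S] I, h ∘ₗ j = i) :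
    Nonempty (Pushout i j ≃ₗ[S] (I × B)) := by
  obtain ⟨p, hexact, hp⟩ := exists_exact_pushoutInl i hjq hq
  obtain ⟨e, -⟩ := ((hexact.split_tfae (pushoutInl_injective i hj) hp).out 1 2).mp
    ((exists_pushoutInl_retraction_iff i j).mpr hext)
  exact ⟨e⟩

theorem pushout_comm (i : L →ₗ[S] I) (j : L →ₗ[S] J) :
    Nonempty (Pushout i j ≃ₗ[S] Pushout j i) :=
  ⟨Submodule.Quotient.equiv _ _ (LinearEquiv.prodComm S I J) <| by
    ext ⟨y, x⟩
    rw [Submodule.mem_map_equiv]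
    change (∃ w, (i w, (-j) w) = (x, y)) ↔ ∃ w, (j w, (-i) w) = (y, x)
    exact (Equiv.neg L).exists_congr fun w => by simp [and_comm]⟩

theorem dual_schanuel {i : L →ₗ[S] I} {p : I →ₗ[S] A} {j : L →ₗ[S] J} {q : J →ₗ[S] B}
    (hi : Injective i) (hip : Exact i p) (hp : Surjective p)
    (hj : Injective j) (hjq : Exact j q) (hq : Surjective q)
    (hij : ∃ h : J →ₗ[S] I, h ∘ₗ j = i) (hji : ∃ h : I →ₗ[S] J, h ∘ₗ i = j) :
    Nonempty ((I × B) ≃ₗ[S] (J × A)) := by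
  obtain ⟨e₁⟩ := pushout_equiv_of_extension hj hjq hq hij
  obtain ⟨e₂⟩ := pushout_comm i j
  obtain ⟨e₃⟩ := pushout_equiv_of_extension hi hip hp hji
  exact ⟨e₁.symm.trans (e₂.trans e₃)⟩

end Pushout

section ProjectiveCover

variable {S : Type*} [Ring S] {M P : Type*} [AddCommGroup M] [Module S M] [AddCommGroup P]
  [Module S P]

theorem exists_superfluous_ker_of_surjective [IsArtinian S P] (f : P →ₗ[S] M)
    (hf : Surjective f) :
    ∃ N : Submodule S P, Surjective (f.domRestrict N) ∧
      ∀ N' : Submodule S N, N' ⊔ LinearMap.ker (f.domRestrict N) = ⊤ → N' = ⊤ := by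
  obtain ⟨N, hN, hmin⟩ := WellFounded.has_min (wellFounded_lt (α := Submodule S P))
    {N | N.map f = ⊤} ⟨⊤, (Submodule.map_top f).trans (LinearMap.range_eq_top.mpr hf)⟩
  have hrange : LinearMap.range (f.domRestrict N) = ⊤ := f.range_domRestrict N ▸ hN
  refine ⟨N, LinearMap.range_eq_top.mp hrange, fun N' hN' => ?_⟩
  have hmap : (N'.map N.subtype).map f = ⊤ := by
    rw [← Submodule.map_comp]
    exact (LinearMap.map_eq_top_iff hrange).mpr hN'
  rw [← Submodule.map_subtype_top N] at hmin
  exact (Submodule.map_injective_of_injective N.injective_subtype).eq_iff.mp <|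
    (Submodule.map_mono le_top).eq_of_not_lt (hmin _ hmap)

theorem exists_projectiveCover_of_surjective [Module.Projective S P] [IsArtinian S P]
    [IsNoetherian S P] (f : P →ₗ[S] M) (hf : Surjective f) :
    ∃ N : Submodule S P, Module.Projective S N ∧ Surjective (f.domRestrict N) ∧
      ∀ N' : Submodule S N, N' ⊔ LinearMap.ker (f.domRestrict N) = ⊤ → N' = ⊤ := by
  obtain ⟨N, hN, hsup⟩ := exists_superfluous_ker_of_surjective f hf
  refine ⟨N, ?_, hN, hsup⟩
  obtain ⟨g, hg⟩ := Module.projective_lifting_property (f.domRestrict N) f hN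
  have hsurj : Surjective (g ∘ₗ N.subtype) := by
    refine LinearMap.range_eq_top.mp (hsup _ ?_)
    rw [← LinearMap.map_eq_top_iff (LinearMap.range_eq_top.mpr hN), ← LinearMap.range_comp,
      ← LinearMap.comp_assoc, hg]
    exact LinearMap.range_eq_top.mpr hN
  let e : N ≃ₗ[S] N :=
    .ofBijective _ (IsNoetherian.bijective_of_surjective_endomorphism _ hsurj)
  exact .of_split N.subtype (e.symm.toLinearMap ∘ₗ g) (LinearMap.ext e.symm_apply_apply)

end ProjectiveCover

section Summand

variable {R}

namespace FGMod

theorem isSummand_iff {N M : FGMod R} :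
    N.IsSummand M ↔ ∃ (i : N →ₗ[Rᵐᵒᵖ] M) (r : M →ₗ[Rᵐᵒᵖ] N), r ∘ₗ i = .id := by
  constructor
  · rintro ⟨A, B, hAB, ⟨e⟩⟩
    refine ⟨A.subtype ∘ₗ e.toLinearMap, e.symm.toLinearMap ∘ₗ A.projectionOnto B hAB, ?_⟩
    ext x
    simp
  · rintro ⟨i, r, hri⟩
    have hinj : Injective i := HasLeftInverse.injective ⟨r, LinearMap.congr_fun hri⟩
    exact ⟨_, _, LinearMap.isCompl_of_proj (f := i.rangeRestrict ∘ₗ r) <| by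
      rintro ⟨_, x, rfl⟩
      exact Subtype.ext (congrArg i (LinearMap.congr_fun hri x)), ⟨.ofInjective i hinj⟩⟩

theorem IsSummand.trans {A B C : FGMod R} (hAB : A.IsSummand B) (hBC : B.IsSummand C) :
    A.IsSummand C := by
  obtain ⟨i, r, hri⟩ := isSummand_iff.mp hAB
  obtain ⟨j, s, hsj⟩ := isSummand_iff.mp hBC
  refine isSummand_iff.mpr ⟨j ∘ₗ i, r ∘ₗ s, ?_⟩
  rw [LinearMap.comp_assoc, ← LinearMap.comp_assoc i j s, hsj, LinearMap.id_comp, hri]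

theorem IsSummand.of_fst {A B M : FGMod R} (e : M ≃ₗ[Rᵐᵒᵖ] (A × B)) : A.IsSummand M :=
  isSummand_iff.mpr ⟨e.symm.toLinearMap ∘ₗ .inl _ _ _, .fst _ _ _ ∘ₗ e.toLinearMap, by ext; simp⟩

theorem IsSummand.of_snd {A B M : FGMod R} (e : M ≃ₗ[Rᵐᵒᵖ] (A × B)) : B.IsSummand M :=
  isSummand_iff.mpr ⟨e.symm.toLinearMap ∘ₗ .inr _ _ _, .snd _ _ _ ∘ₗ e.toLinearMap, by ext; simp⟩

theorem IsSummand.proj {N M : FGMod R} (h : N.IsSummand M) (hM : M.Proj) : N.Proj :=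
  have : Module.Projective Rᵐᵒᵖ M := hM
  let ⟨i, r, hri⟩ := isSummand_iff.mp h
  .of_split i r hri

theorem isSummand_of_isUnit {N M : FGMod R} (i : N →ₗ[Rᵐᵒᵖ] M) (r : M →ₗ[Rᵐᵒᵖ] N)
    (h : IsUnit (r ∘ₗ i : Module.End Rᵐᵒᵖ N)) : N.IsSummand M :=
  let ⟨u, hu⟩ := h.exists_left_inv
  isSummand_iff.mpr ⟨i, u ∘ₗ r, hu⟩

theorem IsSummand.or_of_isLocalRing {N A B M : FGMod R} [IsLocalRing (Module.End Rᵐᵒᵖ N)]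
    (h : N.IsSummand M) (e : M ≃ₗ[Rᵐᵒᵖ] (A × B)) : N.IsSummand A ∨ N.IsSummand B := by
  obtain ⟨i, r, hri⟩ := isSummand_iff.mp h
  let iA : N →ₗ[Rᵐᵒᵖ] A := .fst _ _ _ ∘ₗ e.toLinearMap ∘ₗ i
  let iB : N →ₗ[Rᵐᵒᵖ] B := .snd _ _ _ ∘ₗ e.toLinearMap ∘ₗ i
  let rA : A →ₗ[Rᵐᵒᵖ] N := r ∘ₗ e.symm.toLinearMap ∘ₗ .inl _ _ _
  let rB : B →ₗ[Rᵐᵒᵖ] N := r ∘ₗ e.symm.toLinearMap ∘ₗ .inr _ _ _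
  have hone : (rA ∘ₗ iA + rB ∘ₗ iB : Module.End Rᵐᵒᵖ N) = 1 := LinearMap.ext fun x => by
    change r (e.symm ((e (i x)).1, 0)) + r (e.symm (0, (e (i x)).2)) = x
    rw [← map_add, ← map_add, Prod.fst_add_snd, e.symm_apply_apply]
    exact LinearMap.congr_fun hri x
  exact (IsLocalRing.isUnit_or_isUnit_of_add_one hone).imp
    (isSummand_of_isUnit iA rA) (isSummand_of_isUnit iB rB)

theorem Proj.prod {P Q : FGMod R} (hP : P.Proj) (hQ : Q.Proj) : (P.prod Q).Proj :=
  have : Module.Projective Rᵐᵒᵖ P := hP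
  have : Module.Projective Rᵐᵒᵖ Q := hQ
  inferInstanceAs (Module.Projective Rᵐᵒᵖ (P × Q))

theorem proj_of_subsingleton (M : FGMod R) [Subsingleton M] : M.Proj :=
  inferInstanceAs (Module.Projective Rᵐᵒᵖ M)

variable [IsArtinianRing Rᵐᵒᵖ]

theorem Indec.isLocalRing_end {N : FGMod R} (h : N.Indec) :
    IsLocalRing (Module.End Rᵐᵒᵖ N) :=
  have := h.1
  isLocalRing_end_of_indecomposable h.2

theorem induction_indec {p : FGMod R → Prop} (subsingleton : ∀ M : FGMod R, Subsingleton M → p M)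
    (indec : ∀ M : FGMod R, M.Indec → p M)
    (prod : ∀ M A B : FGMod R, (M ≃ₗ[Rᵐᵒᵖ] (A × B)) → p A → p B → p M) (M : FGMod R) : p M := by
  induction h : Module.length Rᵐᵒᵖ M using WellFoundedLT.induction generalizing M with
  | ind n ih =>
    subst h
    rcases subsingleton_or_nontrivial M with hM | hM
    · exact subsingleton M hM
    by_cases hI : M.Indec
    · exact indec M hI
    obtain ⟨A, B, hAB, hA, hB⟩ : ∃ A B : Submodule Rᵐᵒᵖ M, IsCompl A B ∧ A ≠ ⊥ ∧ B ≠ ⊥ := by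
      simpa only [Indec, hM, true_and, not_forall, not_or, exists_prop] using hI
    exact prod M ⟨A⟩ ⟨B⟩ (Submodule.prodEquivOfIsCompl A B hAB).symm
      (ih _ (Submodule.length_lt fun h => hB (eq_bot_of_top_isCompl (h ▸ hAB))) ⟨A⟩ rfl)
      (ih _ (Submodule.length_lt fun h => hA (eq_bot_of_isCompl_top (h ▸ hAB))) ⟨B⟩ rfl)

theorem prod_left_cancel {C A B : FGMod R} (h : (C.prod A).Iso (C.prod B)) : A.Iso B := by
  induction C using induction_indec generalizing A B with
  | subsingleton C hC =>
    have : Unique C := uniqueOfSubsingleton 0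
    have proj (X : FGMod R) : (C × X) ≃ₗ[Rᵐᵒᵖ] X := .uniqueProd
    exact h.map fun e => (proj A).symm.trans (e.trans (proj B))
  | indec C hC =>
    have := hC.isLocalRing_end
    exact h.elim fun e => nonempty_linearEquiv_of_prod e.symm
  | prod C C₁ C₂ c ih₁ ih₂ =>
    have assoc (X : FGMod R) : (C × X) ≃ₗ[Rᵐᵒᵖ] (C₁ × C₂ × X) :=
      (c.prodCongr (.refl _ _)).trans (.prodAssoc _ _ _ _)
    exact ih₂ (ih₁ (A := C₂.prod A) (B := C₂.prod B)
      (h.map fun e => (assoc A).symm.trans (e.trans (assoc B))))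

theorem exists_projCover (M : FGMod R) : ∃ (P : FGMod R) (f : P →ₗ[Rᵐᵒᵖ] M),
    IsProjCover M P f := by
  obtain ⟨n, f, hf⟩ := Module.Finite.exists_fin' Rᵐᵒᵖ M
  obtain ⟨N, hN⟩ := exists_projectiveCover_of_surjective f hf
  exact ⟨⟨N⟩, f.domRestrict N, hN⟩

theorem exists_isSyzygy (M : FGMod R) : ∃ N, IsSyzygy M N := by
  obtain ⟨P, f, hf⟩ := exists_projCover M
  exact ⟨⟨LinearMap.ker f⟩, P, f, hf, ⟨.refl _ _⟩⟩

end FGMod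

end Summand

section StableIsomorphism

variable {R}

namespace FGMod

/-- Stable isomorphism: isomorphism after adding projective direct summands. -/
def StablyIso (A B : FGMod R) : Prop :=
  ∃ P Q : FGMod R, P.Proj ∧ Q.Proj ∧ Nonempty ((A × P) ≃ₗ[Rᵐᵒᵖ] (B × Q))

theorem StablyIso.of_equiv {A B : FGMod R} (e : A ≃ₗ[Rᵐᵒᵖ] B) : A.StablyIso B :=
  ⟨⟨PUnit⟩, ⟨PUnit⟩, proj_of_subsingleton _, proj_of_subsingleton _, ⟨e.prodCongr (.refl _ _)⟩⟩

theorem StablyIso.symm {A B : FGMod R} : A.StablyIso B → B.StablyIso A :=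
  fun ⟨P, Q, hP, hQ, ⟨e⟩⟩ => ⟨Q, P, hQ, hP, ⟨e.symm⟩⟩

theorem StablyIso.trans {A B C : FGMod R} : A.StablyIso B → B.StablyIso C → A.StablyIso C := by
  rintro ⟨P, Q, hP, hQ, ⟨e⟩⟩ ⟨P', Q', hP', hQ', ⟨e'⟩⟩
  have swap : ((B × Q) × P') ≃ₗ[Rᵐᵒᵖ] ((B × P') × Q) :=
    (LinearEquiv.prodAssoc _ _ _ _).trans <|
      ((LinearEquiv.refl _ _).prodCongr (.prodComm _ _ _)).trans (.symm (.prodAssoc _ _ _ _))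
  exact ⟨P.prod P', Q'.prod Q, hP.prod hP', hQ'.prod hQ,
    ⟨(LinearEquiv.prodAssoc _ _ _ _).symm.trans <| (e.prodCongr (.refl _ _)).trans <|
      swap.trans <| (e'.prodCongr (.refl _ _)).trans (.prodAssoc _ _ _ _)⟩⟩

theorem StablyIso.prod {A B A' B' : FGMod R} :
    A.StablyIso A' → B.StablyIso B' → (A.prod B).StablyIso (A'.prod B') := by
  rintro ⟨P, P', hP, hP', ⟨e⟩⟩ ⟨Q, Q', hQ, hQ', ⟨e'⟩⟩
  exact ⟨P.prod Q, P'.prod Q', hP.prod hQ, hP'.prod hQ',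
    ⟨(LinearEquiv.prodProdProdComm _ _ _ _ _).trans <|
      (e.prodCongr e').trans (.prodProdProdComm _ _ _ _ _)⟩⟩

theorem StablyIso.of_prod_left [IsArtinianRing Rᵐᵒᵖ] {A B C : FGMod R} :
    (C.prod A).StablyIso (C.prod B) → A.StablyIso B := by
  rintro ⟨P, Q, hP, hQ, ⟨e⟩⟩
  exact ⟨P, Q, hP, hQ, prod_left_cancel (C := C) (A := A.prod P) (B := B.prod Q)
    ⟨(LinearEquiv.prodAssoc _ _ _ _).symm.trans (e.trans (.prodAssoc _ _ _ _))⟩⟩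

end FGMod

variable (R)

/-- Stable isomorphism as a setoid on the finitely generated right modules. -/
def stableSetoid : Setoid (FGMod R) where
  r := FGMod.StablyIso
  iseqv := ⟨fun _ => .of_equiv (.refl _ _), .symm, .trans⟩

/-- The commutative monoid, under direct sum, of stable isomorphism classes of finitely generated
right modules. Its Grothendieck group is the Igusa–Todorov group, and it is cancellative over an
artinian ring. -/
def StableClass : Type (u + 1) := Quotient (stableSetoid R)

variable {R} in
/-- The stable isomorphism class of a finitely generated right module. -/
def FGMod.stableClass (M : FGMod R) : StableClass R := Quotient.mk _ M

variable {R} in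
theorem FGMod.stableClass_eq_iff {A B : FGMod R} :
    A.stableClass = B.stableClass ↔ A.StablyIso B := Quotient.eq

namespace StableClass

instance : Add (StableClass R) :=
  ⟨Quotient.map₂ FGMod.prod fun _ _ h _ _ h' => h.prod h'⟩

instance : Zero (StableClass R) := ⟨FGMod.stableClass ⟨PUnit⟩⟩

instance : AddCommMonoid (StableClass R) where
  add_assoc := by
    rintro ⟨A⟩ ⟨B⟩ ⟨C⟩
    exact FGMod.stableClass_eq_iff.mpr (.of_equiv (.prodAssoc _ A B C))
  zero_add := by
    rintro ⟨A⟩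
    exact FGMod.stableClass_eq_iff.mpr (.of_equiv .uniqueProd)
  add_zero := by
    rintro ⟨A⟩
    exact FGMod.stableClass_eq_iff.mpr (.of_equiv .prodUnique)
  add_comm := by
    rintro ⟨A⟩ ⟨B⟩
    exact FGMod.stableClass_eq_iff.mpr (.of_equiv (.prodComm _ A B))
  nsmul := nsmulRec

instance [IsArtinianRing Rᵐᵒᵖ] : IsCancelAdd (StableClass R) :=
  have : IsLeftCancelAdd (StableClass R) := ⟨by
    rintro ⟨C⟩ ⟨A⟩ ⟨B⟩ h
    have hCAB : (C.prod A).stableClass = (C.prod B).stableClass := h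
    exact FGMod.stableClass_eq_iff.mpr (FGMod.stableClass_eq_iff.mp hCAB).of_prod_left⟩
  AddCommMagma.IsLeftCancelAdd.toIsCancelAdd _

end StableClass

variable {R} in
theorem FGMod.stableClass_eq_add {M A B : FGMod R} (e : M ≃ₗ[Rᵐᵒᵖ] (A × B)) :
    M.stableClass = A.stableClass + B.stableClass :=
  stableClass_eq_iff.mpr (.of_equiv (B := A.prod B) e)

variable {R} in
theorem FGMod.stableClass_eq_zero_of_proj {P : FGMod R} (hP : P.Proj) : P.stableClass = 0 :=
  stableClass_eq_iff.mpr ⟨⟨PUnit⟩, P, proj_of_subsingleton _, hP, ⟨.prodComm _ _ _⟩⟩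

end StableIsomorphism

section IgusaTodorovGroup

theorem ITcls_eq_add {M A B : FGMod R} (e : M ≃ₗ[Rᵐᵒᵖ] (A × B)) :
    ITcls R M = ITcls R A + ITcls R B := by
  have hrel : ITcls R M - ITcls R A - ITcls R B = 0 :=
    (QuotientAddGroup.eq_zero_iff _).mpr (AddSubgroup.subset_closure (.inl ⟨M, A, B, ⟨e⟩, rfl⟩))
  rwa [sub_sub, sub_eq_zero] at hrel

theorem ITcls_prod (A B : FGMod R) : ITcls R (A.prod B) = ITcls R A + ITcls R B :=
  ITcls_eq_add R (.refl _ _)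

theorem ITcls_eq_zero_of_proj {P : FGMod R} (hP : P.Proj) : ITcls R P = 0 :=
  (QuotientAddGroup.eq_zero_iff _).mpr (AddSubgroup.subset_closure (.inr ⟨P, hP, rfl⟩))

theorem ITcls_eq_of_stablyIso {A B : FGMod R} : A.StablyIso B → ITcls R A = ITcls R B := by
  rintro ⟨P, Q, hP, hQ, ⟨e⟩⟩
  have h := (ITcls_eq_add R (M := A.prod P) (A := B) (B := Q) e).symm.trans (ITcls_prod R A P)
  rw [ITcls_eq_zero_of_proj R hP, ITcls_eq_zero_of_proj R hQ, add_zero, add_zero] at h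
  exact h.symm

theorem ITcls_congr {A B : FGMod R} (e : A ≃ₗ[Rᵐᵒᵖ] B) : ITcls R A = ITcls R B :=
  ITcls_eq_of_stablyIso R (.of_equiv e)

/-- The homomorphism from the Igusa–Todorov group to the Grothendieck group of the monoid of stable
isomorphism classes, sending `[M]` to the class of `M`. -/
noncomputable def ITK.toStable : ITK R →+ Algebra.GrothendieckAddGroup (StableClass R) :=
  QuotientAddGroup.lift _
    (FreeAbelianGroup.lift fun M => Algebra.GrothendieckAddGroup.of M.stableClass) <| by
    refine (AddSubgroup.closure_le _).mpr ?_
    rintro _ (⟨A, B, C, ⟨e⟩, rfl⟩ | ⟨P, hP, rfl⟩)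
    · simp [AddMonoidHom.mem_ker, FGMod.stableClass_eq_add e]
    · simp [AddMonoidHom.mem_ker, FGMod.stableClass_eq_zero_of_proj hP]

theorem ITK.toStable_ITcls (M : FGMod R) :
    ITK.toStable R (ITcls R M) = Algebra.GrothendieckAddGroup.of M.stableClass :=
  FreeAbelianGroup.lift_apply_of _ _

theorem ITcls_eq_iff_stablyIso [IsArtinianRing Rᵐᵒᵖ] {A B : FGMod R} :
    ITcls R A = ITcls R B ↔ A.StablyIso B := by
  refine ⟨fun h => ?_, ITcls_eq_of_stablyIso R⟩
  refine FGMod.stableClass_eq_iff.mp (Algebra.GrothendieckAddGroup.of_injective ?_)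
  rw [← ITK.toStable_ITcls, h, ITK.toStable_ITcls]

theorem exists_eq_ITcls_sub_ITcls (x : ITK R) :
    ∃ A B : FGMod R, x = ITcls R A - ITcls R B := by
  have hzero : ITcls R ⟨PUnit⟩ = 0 := ITcls_eq_zero_of_proj R (FGMod.proj_of_subsingleton _)
  obtain ⟨y, rfl⟩ := QuotientAddGroup.mk_surjective x
  induction y using FreeAbelianGroup.induction_on with
  | zero => exact ⟨⟨PUnit⟩, ⟨PUnit⟩, (sub_self _).symm⟩
  | of A => exact ⟨A, ⟨PUnit⟩, by rw [hzero, sub_zero]; rfl⟩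
  | neg A _ => exact ⟨⟨PUnit⟩, A, by rw [hzero, zero_sub]; rfl⟩
  | add y z hy hz =>
    obtain ⟨A, B, hAB⟩ := hy
    obtain ⟨A', B', hAB'⟩ := hz
    refine ⟨A.prod A', B.prod B', ?_⟩
    rw [ITcls_prod, ITcls_prod, add_sub_add_comm, ← hAB, ← hAB']
    rfl

end IgusaTodorovGroup

section Syzygy

variable {R}

/-- `N` is the kernel of some surjection onto `M` from a finitely generated projective module,
which need not be a projective cover. -/
def IsWeakSyzygy (M N : FGMod R) : Prop :=
  ∃ (P : FGMod R) (i : N →ₗ[Rᵐᵒᵖ] P) (f : P →ₗ[Rᵐᵒᵖ] M),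
    P.Proj ∧ Injective i ∧ Exact i f ∧ Surjective f

theorem IsSyzygy.isWeakSyzygy {M N : FGMod R} : IsSyzygy M N → IsWeakSyzygy M N := by
  rintro ⟨P, f, ⟨hP, hf, -⟩, ⟨e⟩⟩
  refine ⟨P, (LinearMap.ker f).subtype ∘ₗ e.toLinearMap, f, hP,
    (Submodule.injective_subtype _).comp e.injective, LinearMap.exact_iff.mpr ?_, hf⟩
  rw [LinearMap.range_comp, LinearEquiv.range, Submodule.map_subtype_top]

namespace IsWeakSyzygy

theorem of_equiv {M N N' : FGMod R} (h : IsWeakSyzygy M N) (e : N' ≃ₗ[Rᵐᵒᵖ] N) :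
    IsWeakSyzygy M N' := by
  obtain ⟨P, i, f, hP, hi, hif, hf⟩ := h
  exact ⟨P, i ∘ₗ e.toLinearMap, f, hP, hi.comp e.injective,
    e.surjective.comp_exact_iff_exact.mpr hif, hf⟩

theorem prod_proj {M N Q : FGMod R} (h : IsWeakSyzygy M N) (hQ : Q.Proj) :
    IsWeakSyzygy M (N.prod Q) := by
  obtain ⟨P, i, f, hP, hi, hif, hf⟩ := h
  refine ⟨P.prod Q, i.prodMap .id, f ∘ₗ .fst _ _ _, hP.prod hQ, hi.prodMap injective_id, ?_,
    hf.comp Prod.fst_surjective⟩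
  rintro ⟨x, y⟩
  exact (hif x).trans ⟨fun ⟨n, hn⟩ => ⟨(n, y), Prod.ext hn rfl⟩,
    fun ⟨z, hz⟩ => ⟨z.1, congrArg Prod.fst hz⟩⟩

theorem stablyIso {M N N' : FGMod R} (h : IsWeakSyzygy M N) (h' : IsWeakSyzygy M N') :
    N.StablyIso N' := by
  obtain ⟨P, i, f, hP, hi, hif, hf⟩ := h
  obtain ⟨P', i', f', hP', hi', hif', hf'⟩ := h'
  have : Module.Projective Rᵐᵒᵖ P := hP
  have : Module.Projective Rᵐᵒᵖ P' := hP'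
  exact ⟨P', P, hP', hP, schanuel hi hif hf hi' hif' hf'⟩

-- Pull the presentation of `T` back along `E → T`: the new middle term is an extension of a
-- projective module by `Q`, so it is projective.
theorem of_extension [IsArtinianRing Rᵐᵒᵖ] {Q E T N : FGMod R} (h : IsWeakSyzygy T N)
    (hQ : Q.Proj) {j : Q →ₗ[Rᵐᵒᵖ] E} {g : E →ₗ[Rᵐᵒᵖ] T} (hj : Injective j) (hjg : Exact j g)
    (hg : Surjective g) : IsWeakSyzygy E N := by
  obtain ⟨P, i, f, hP, hi, hif, hf⟩ := h
  have : Module.Projective Rᵐᵒᵖ P := hP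
  have : Module.Projective Rᵐᵒᵖ Q := hQ
  obtain ⟨e₁⟩ := fiberProduct_comm g f
  obtain ⟨e₂⟩ := fiberProduct_equiv_of_projective f hj hjg hg
  obtain ⟨k, hk, hkfst⟩ := exists_exact_fiberProductFst g hi hif
  exact ⟨⟨fiberProduct g f⟩, k, fiberProductFst g f,
    Module.Projective.of_equiv (e₁.trans e₂).symm, hk, hkfst, fiberProductFst_surjective g hf⟩

end IsWeakSyzygy

theorem IsSyzygyEnd.apply_ITcls [IsArtinianRing Rᵐᵒᵖ] {OmK : AddMonoid.End (ITK R)}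
    (hOm : IsSyzygyEnd R OmK) {M N : FGMod R} (h : IsWeakSyzygy M N) :
    OmK (ITcls R M) = ITcls R N := by
  obtain ⟨N', hN'⟩ := M.exists_isSyzygy
  rw [hOm M N' hN', ITcls_eq_of_stablyIso R (hN'.isWeakSyzygy.stablyIso h)]

theorem IsSyzygyEnd.apply_eq_of_extension [IsArtinianRing Rᵐᵒᵖ] {OmK : AddMonoid.End (ITK R)}
    (hOm : IsSyzygyEnd R OmK) {Q E T : FGMod R} (hQ : Q.Proj) {j : Q →ₗ[Rᵐᵒᵖ] E}
    {g : E →ₗ[Rᵐᵒᵖ] T} (hj : Injective j) (hjg : Exact j g) (hg : Surjective g) :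
    OmK (ITcls R E) = OmK (ITcls R T) := by
  obtain ⟨N, hN⟩ := T.exists_isSyzygy
  rw [hOm.apply_ITcls (hN.isWeakSyzygy.of_extension hQ hj hjg hg), hOm T N hN]

end Syzygy

section Rank

theorem exists_smul_eq_zero_of_finrank_map_eq {S V W : Type*} [CommRing S] [IsDomain S]
    [IsNoetherianRing S] [AddCommGroup V] [Module S V] [AddCommGroup W] [Module S W]
    {H : Submodule S V} [Module.Finite S H] {f : V →ₗ[S] W}
    (h : finrank S (H.map f) = finrank S H) {x : V} (hx : x ∈ H) (hfx : f x = 0) :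
    ∃ a : S, a ≠ 0 ∧ a • x = 0 := by
  have hsum := Submodule.finrank_quotient_add_finrank (LinearMap.ker (f.domRestrict H))
  rw [(f.domRestrict H).quotKerEquivRange.finrank_eq, LinearMap.range_domRestrict, h,
    Nat.add_eq_left] at hsum
  obtain ⟨a, ha, hax⟩ := finrank_eq_zero_iff.mp hsum ⟨⟨x, hx⟩, hfx⟩
  exact ⟨a, ha, congrArg (fun z => z.1.1) hax⟩

variable {R}

theorem rkIT_map_of_injective (H : AddSubgroup (ITK R)) {f : ITK R →+ ITK R} (hf : Injective f) :
    rkIT R (H.map f) = rkIT R H :=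
  (Submodule.equivMapOfInjective f.toIntLinearMap hf (AddSubgroup.toIntSubmodule H)).finrank_eq.symm

theorem rkIT_map_le (H : AddSubgroup (ITK R)) [Module.Finite ℤ (AddSubgroup.toIntSubmodule H)]
    (f : ITK R →+ ITK R) : rkIT R (H.map f) ≤ rkIT R H :=
  Submodule.finrank_map_le f.toIntLinearMap (AddSubgroup.toIntSubmodule H)

theorem isOfFinAddOrder_of_rkIT_map_eq {H : AddSubgroup (ITK R)}
    [Module.Finite ℤ (AddSubgroup.toIntSubmodule H)] {f : ITK R →+ ITK R}
    (h : rkIT R (H.map f) = rkIT R H) {x : ITK R} (hx : x ∈ H) (hfx : f x = 0) :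
    IsOfFinAddOrder x :=
  isOfFinAddOrder_iff_zsmul_eq_zero.mpr <|
    exists_smul_eq_zero_of_finrank_map_eq (H := AddSubgroup.toIntSubmodule H)
      (f := f.toIntLinearMap) h hx hfx

theorem FGMod.Indec.iso_of_isSummand {N M : FGMod R} (hN : N.Indec) (hM : M.Indec)
    (h : N.IsSummand M) : N.Iso M := by
  obtain ⟨A, B, hAB, ⟨e⟩⟩ := h
  have := hN.1
  rcases hM.2 A B hAB with rfl | rfl
  · exact absurd e.toEquiv.subsingleton (not_subsingleton N)
  · rw [eq_top_of_isCompl_bot hAB] at e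
    exact ⟨e.trans Submodule.topEquiv⟩

variable [IsArtinianRing Rᵐᵒᵖ]

theorem FGMod.finite_ITcls_indec_summand (M : FGMod R) :
    {x | ∃ N : FGMod R, N.IsSummand M ∧ N.Indec ∧ x = ITcls R N}.Finite := by
  induction M using induction_indec with
  | subsingleton M hM =>
    refine Set.finite_empty.subset ?_
    rintro _ ⟨N, ⟨A, -, -, ⟨e⟩⟩, hN, -⟩
    have := hN.1
    exact not_subsingleton N e.toEquiv.subsingleton
  | indec M hM =>
    refine (Set.finite_singleton (ITcls R M)).subset ?_
    rintro _ ⟨N, hNM, hN, rfl⟩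
    exact (hN.iso_of_isSummand hM hNM).elim (ITcls_congr R)
  | prod M A B e hA hB =>
    refine (hA.union hB).subset ?_
    rintro _ ⟨N, hNM, hN, rfl⟩
    have := hN.isLocalRing_end
    exact (hNM.or_of_isLocalRing e).imp (⟨N, ·, hN, rfl⟩) (⟨N, ·, hN, rfl⟩)

instance finite_ITgen (M : FGMod R) :
    Module.Finite ℤ (AddSubgroup.toIntSubmodule (ITgen R M)) :=
  Module.Finite.iff_fg.mpr <| (Submodule.fg_iff_addSubgroup_fg _).mpr <|
    (AddSubgroup.fg_iff _).mpr ⟨_, rfl, M.finite_ITcls_indec_summand.subset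
      fun _ ⟨N, hNM, hN, _, hx⟩ => ⟨N, hNM, hN, hx⟩⟩

theorem FGMod.IsSummand.ITcls_mem_ITgen {A M : FGMod R} (h : A.IsSummand M) :
    ITcls R A ∈ ITgen R M := by
  induction A using induction_indec with
  | subsingleton A hA => exact ITcls_eq_zero_of_proj R A.proj_of_subsingleton ▸ zero_mem _
  | indec A hA =>
    by_cases hP : A.Proj
    · exact ITcls_eq_zero_of_proj R hP ▸ zero_mem _
    · exact AddSubgroup.subset_closure ⟨A, h, hA, hP, rfl⟩
  | prod A B C e hB hC =>
    rw [ITcls_eq_add R e]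
    exact add_mem (hB ((IsSummand.of_fst e).trans h)) (hC ((IsSummand.of_snd e).trans h))

theorem rkIT_map_pow_eq_of_phiIT_le (OmK : AddMonoid.End (ITK R)) (M : FGMod R) {i : ℕ}
    (hi : phiIT R OmK M ≤ i) :
    rkIT R ((ITgen R M).map (OmK ^ i : AddMonoid.End (ITK R)))
      = rkIT R ((ITgen R M).map (OmK ^ phiIT R OmK M : AddMonoid.End (ITK R))) := by
  let rk : ℕ → ℕ := fun n => rkIT R ((ITgen R M).map (OmK ^ n : AddMonoid.End (ITK R)))
  have hanti : Antitone rk := antitone_nat_of_succ_le fun n => by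
    have hmap : (ITgen R M).map (OmK ^ (n + 1) : AddMonoid.End (ITK R)) =
        ((ITgen R M).map (OmK ^ n : AddMonoid.End (ITK R))).map OmK :=
      pow_succ' OmK n ▸ (AddSubgroup.map_map _ OmK _).symm
    have : Module.Finite ℤ (AddSubgroup.toIntSubmodule
        ((ITgen R M).map (OmK ^ n : AddMonoid.End (ITK R)))) :=
      Module.Finite.map (AddSubgroup.toIntSubmodule (ITgen R M))
        (OmK ^ n : AddMonoid.End (ITK R)).toIntLinearMap
    exact (congrArg (rkIT R) hmap).trans_le (rkIT_map_le _ OmK)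
  obtain ⟨n, hn⟩ := WellFoundedLT.antitone_chain_condition hanti
  exact Nat.sInf_mem (s := {n | ∀ i, n ≤ i → rk i = rk n}) ⟨n, fun i hi => (hn i hi).symm⟩ i hi

theorem isOfFinAddOrder_of_phiIT_eq_zero {OmK : AddMonoid.End (ITK R)} {M : FGMod R}
    (hφ : phiIT R OmK M = 0) {x : ITK R} (hx : x ∈ ITgen R M) (hOx : OmK x = 0) :
    IsOfFinAddOrder x := by
  refine isOfFinAddOrder_of_rkIT_map_eq (f := OmK) ?_ hx hOx
  have hrk := rkIT_map_pow_eq_of_phiIT_le OmK M (i := 1) (by lia)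
  rw [hφ, pow_one, pow_zero] at hrk
  exact hrk.trans (congrArg (rkIT R) (AddSubgroup.map_id _))

end Rank

section SelfInjective

variable {R}

theorem FGMod.Proj.exists_extension [Module.Injective Rᵐᵒᵖ Rᵐᵒᵖ] {P X Y : FGMod R} (hP : P.Proj)
    {f : X →ₗ[Rᵐᵒᵖ] Y} (hf : Injective f) (g : X →ₗ[Rᵐᵒᵖ] P) :
    ∃ h : Y →ₗ[Rᵐᵒᵖ] P, h ∘ₗ f = g := by
  have : Module.Projective Rᵐᵒᵖ P := hP
  obtain ⟨n, p, hp⟩ := Module.Finite.exists_fin' Rᵐᵒᵖ P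
  obtain ⟨s, hs⟩ := Module.projective_lifting_property p .id hp
  obtain ⟨h, hh⟩ := Module.Injective.extension_property Rᵐᵒᵖ (Fin n → Rᵐᵒᵖ) X Y f hf (s ∘ₗ g)
  exact ⟨p ∘ₗ h, by rw [LinearMap.comp_assoc, hh, ← LinearMap.comp_assoc, hs, LinearMap.id_comp]⟩

theorem FGMod.Proj.of_isWeakSyzygy [Module.Injective Rᵐᵒᵖ Rᵐᵒᵖ] {M N : FGMod R} (hN : N.Proj)
    (h : IsWeakSyzygy M N) : M.Proj := by
  obtain ⟨P, i, f, hP, hi, hif, hf⟩ := h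
  obtain ⟨s, hs⟩ := ((hif.split_tfae hi hf).out 0 1).mpr (hN.exists_extension hi .id)
  have : Module.Projective Rᵐᵒᵖ P := hP
  exact .of_split s f hs

theorem HasPdLE.proj [Module.Injective Rᵐᵒᵖ Rᵐᵒᵖ] {n : ℕ} {M : FGMod R} (h : HasPdLE n M) :
    M.Proj := by
  induction n generalizing M with
  | zero => exact h
  | succ n ih =>
    obtain hM | ⟨N, hMN, hN⟩ := h
    · exact hM
    · exact (ih hN).of_isWeakSyzygy hMN.isWeakSyzygy

theorem pdIT_eq_zero_of_proj {M : FGMod R} (hM : M.Proj) : pdIT M = 0 :=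
  Nat.sInf_eq_zero.mpr (.inl hM)

theorem IsWeakSyzygy.stablyIso_of_injective [Module.Injective Rᵐᵒᵖ Rᵐᵒᵖ] {A B L : FGMod R}
    (hA : IsWeakSyzygy A L) (hB : IsWeakSyzygy B L) : A.StablyIso B := by
  obtain ⟨P, i, p, hP, hi, hip, hp⟩ := hA
  obtain ⟨Q, j, q, hQ, hj, hjq, hq⟩ := hB
  obtain ⟨e⟩ := dual_schanuel hi hip hp hj hjq hq (hP.exists_extension hj i)
    (hQ.exists_extension hi j)
  exact ⟨Q, P, hQ, hP, ⟨(LinearEquiv.prodComm _ _ _).trans (e.symm.trans (.prodComm _ _ _))⟩⟩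

theorem IsSyzygyEnd.injective [IsArtinianRing Rᵐᵒᵖ] [Module.Injective Rᵐᵒᵖ Rᵐᵒᵖ]
    {OmK : AddMonoid.End (ITK R)} (hOm : IsSyzygyEnd R OmK) : Injective OmK := by
  refine (injective_iff_map_eq_zero _).mpr fun x hx => ?_
  obtain ⟨A, B, rfl⟩ := exists_eq_ITcls_sub_ITcls R x
  obtain ⟨N, hN⟩ := A.exists_isSyzygy
  obtain ⟨N', hN'⟩ := B.exists_isSyzygy
  rw [map_sub, hOm A N hN, hOm B N' hN', sub_eq_zero, ITcls_eq_iff_stablyIso] at hx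
  obtain ⟨P, Q, hP, hQ, ⟨e⟩⟩ := hx
  have hA : IsWeakSyzygy A (N.prod P) := hN.isWeakSyzygy.prod_proj hP
  have hB : IsWeakSyzygy B (N.prod P) := (hN'.isWeakSyzygy.prod_proj hQ).of_equiv e
  exact sub_eq_zero.mpr (ITcls_eq_of_stablyIso R (hA.stablyIso_of_injective hB))

theorem phiIT_eq_zero_of_injective {OmK : AddMonoid.End (ITK R)} (hOm : Injective OmK)
    (M : FGMod R) : phiIT R OmK M = 0 := by
  have hpow (i : ℕ) : Injective (OmK ^ i : AddMonoid.End (ITK R)) :=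
    AddMonoid.End.coe_pow _ OmK i ▸ hOm.iterate i
  exact Nat.sInf_eq_zero.mpr <| .inl fun i _ =>
    (rkIT_map_of_injective _ (hpow i)).trans (rkIT_map_of_injective _ (hpow 0)).symm

theorem psiIT_eq_phiIT [Module.Injective Rᵐᵒᵖ Rᵐᵒᵖ] (OmK : AddMonoid.End (ITK R)) (M : FGMod R) :
    psiIT R OmK M = phiIT R OmK M := by
  refine Nat.add_eq_left.mpr (Nat.le_zero.mp (csSup_le' ?_))
  rintro _ ⟨-, X, -, -, ⟨n, hn⟩, rfl⟩
  exact pdIT_eq_zero_of_proj hn.proj |>.le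

end SelfInjective

section SimpleExtension

theorem exists_covBy_not_extends {S Q : Type*} [Ring S] [IsArtinianRing S] [AddCommGroup Q]
    [Module S Q] (hQ : ¬Module.Injective S Q) :
    ∃ (I J : Ideal S) (hIJ : I ⋖ J) (f : I →ₗ[S] Q),
      ¬∃ g : J →ₗ[S] Q, g ∘ₗ Submodule.inclusion hIJ.le = f := by
  have hBaer : ∃ I : Ideal S, ∃ f : I →ₗ[S] Q, ¬∃ g : S →ₗ[S] Q, g ∘ₗ I.subtype = f := by
    by_contra! h
    refine hQ (Module.Baer.injective fun I f => ?_)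
    obtain ⟨g, rfl⟩ := h I f
    exact ⟨g, fun _ _ => rfl⟩
  obtain ⟨I, ⟨f, hf⟩, hmax⟩ := WellFounded.has_min (wellFounded_gt (α := Ideal S)) _ hBaer
  have hI : ¬IsMax I := by
    rw [isMax_iff_eq_top]
    rintro rfl
    exact hf ⟨f ∘ₗ Submodule.topEquiv.symm.toLinearMap, rfl⟩
  obtain ⟨J, hIJ⟩ := exists_covBy_of_wellFoundedLT hI
  refine ⟨I, J, hIJ, f, ?_⟩
  rintro ⟨g, rfl⟩
  refine hmax J ⟨g, ?_⟩ hIJ.lt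
  rintro ⟨h, rfl⟩
  exact hf ⟨h, rfl⟩

variable {R}

namespace FGMod

theorem exists_simple_extension_of_not_injective [IsArtinianRing Rᵐᵒᵖ] {Q : FGMod R}
    (hQ : ¬Module.Injective Rᵐᵒᵖ Q) :
    ∃ (E T : FGMod R) (j : Q →ₗ[Rᵐᵒᵖ] E) (g : E →ₗ[Rᵐᵒᵖ] T), IsSimpleModule Rᵐᵒᵖ T ∧
      Injective j ∧ Exact j g ∧ Surjective g ∧ ¬∃ l, l ∘ₗ j = .id := by
  obtain ⟨I, J, hIJ, f, hf⟩ := exists_covBy_not_extends hQ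
  have hincl : Injective (Submodule.inclusion hIJ.le) := Submodule.inclusion_injective _
  have hsimple : IsSimpleModule Rᵐᵒᵖ (J ⧸ LinearMap.range (Submodule.inclusion hIJ.le)) := by
    rw [Submodule.range_inclusion]
    exact (covBy_iff_quot_is_simple hIJ.le).mp hIJ
  obtain ⟨g, hjg, hg⟩ := exists_exact_pushoutInl f
    (LinearMap.exact_map_mkQ_range (Submodule.inclusion hIJ.le)) (Submodule.mkQ_surjective _)
  exact ⟨⟨Pushout f _⟩, ⟨J ⧸ _⟩, pushoutInl f _, g, hsimple, pushoutInl_injective f hincl, hjg, hg,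
    (exists_pushoutInl_retraction_iff f _).not.mpr hf⟩

-- For `i : T → E` split by `r`, the endomorphism `g ∘ i` of the simple module `T` either is
-- invertible, and splits `g`, or vanishes, and `i` factors through `Q`.
theorem IsSummand.retraction_or_isSummand {Q E T : FGMod R} [IsSimpleModule Rᵐᵒᵖ T]
    {j : Q →ₗ[Rᵐᵒᵖ] E} {g : E →ₗ[Rᵐᵒᵖ] T} (hj : Injective j) (hjg : Exact j g)
    (hg : Surjective g) (h : T.IsSummand E) : (∃ l, l ∘ₗ j = .id) ∨ T.IsSummand Q := by
  obtain ⟨i, r, hri⟩ := isSummand_iff.mp h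
  rcases (g ∘ₗ i).bijective_or_eq_zero with hbij | hzero
  · let e : T ≃ₗ[Rᵐᵒᵖ] T := .ofBijective _ hbij
    have hsec : ∃ s, g ∘ₗ s = .id := ⟨i ∘ₗ e.symm.toLinearMap, LinearMap.ext e.apply_symm_apply⟩
    exact .inl (((hjg.split_tfae hj hg).out 0 1).mp hsec)
  · have hrange (x : T) : i x ∈ LinearMap.range j := (hjg (i x)).mp (LinearMap.congr_fun hzero x)
    let k : T →ₗ[Rᵐᵒᵖ] Q :=
      (LinearEquiv.ofInjective j hj).symm.toLinearMap ∘ₗ i.codRestrict _ hrange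
    have hjk (x : T) : j (k x) = i x :=
      congrArg Subtype.val ((LinearEquiv.ofInjective j hj).apply_symm_apply ⟨i x, hrange x⟩)
    refine .inr (isSummand_iff.mpr ⟨k, r ∘ₗ j, LinearMap.ext fun x => ?_⟩)
    exact (congrArg r (hjk x)).trans (LinearMap.congr_fun hri x)

theorem indec_of_isSimpleModule (T : FGMod R) [IsSimpleModule Rᵐᵒᵖ T] : T.Indec :=
  ⟨IsSimpleModule.nontrivial Rᵐᵒᵖ T, fun A _ hAB =>
    (eq_bot_or_eq_top A).imp_right fun hA : A = ⊤ => eq_bot_of_top_isCompl (hA ▸ hAB)⟩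

end FGMod

end SimpleExtension

section Power

variable {R}

namespace FGMod

/-- `M^(n+1)` is the direct sum of `M` and `M^n`. -/
def powSuccEquiv (M : FGMod R) (n : ℕ) : M.pow (n + 1) ≃ₗ[Rᵐᵒᵖ] (M × M.pow n) :=
  (Fin.consLinearEquiv Rᵐᵒᵖ fun _ => M).symm

theorem ITcls_pow (M : FGMod R) (n : ℕ) : ITcls R (M.pow n) = n • ITcls R M := by
  induction n with
  | zero =>
    have : Subsingleton (M.pow 0) := inferInstanceAs (Subsingleton (Fin 0 → M))
    rw [ITcls_eq_zero_of_proj R (M.pow 0).proj_of_subsingleton, zero_smul]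
  | succ n ih => rw [ITcls_eq_add R (M.powSuccEquiv n), ih, succ_nsmul']

variable [IsArtinianRing Rᵐᵒᵖ] {N M : FGMod R}

theorem Indec.isSummand_of_isSummand_pow (hN : N.Indec) {n : ℕ} (h : N.IsSummand (M.pow n)) :
    N.IsSummand M := by
  induction n with
  | zero =>
    obtain ⟨A, -, -, ⟨e⟩⟩ := h
    have : Subsingleton (M.pow 0) := inferInstanceAs (Subsingleton (Fin 0 → M))
    have := hN.1
    exact absurd e.toEquiv.subsingleton (not_subsingleton N)
  | succ n ih =>
    have := hN.isLocalRing_end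
    exact (h.or_of_isLocalRing (M.powSuccEquiv n)).elim id ih

theorem Indec.isSummand_of_nsmul_eq (hN : N.Indec) (hNP : ¬N.Proj) {n : ℕ} (hn : 0 < n)
    (h : n • ITcls R M = n • ITcls R N) : N.IsSummand M := by
  rw [← ITcls_pow, ← ITcls_pow, ITcls_eq_iff_stablyIso] at h
  obtain ⟨P, Q, hP, -, ⟨e⟩⟩ := h
  have := hN.isLocalRing_end
  obtain ⟨m, rfl⟩ := Nat.exists_eq_add_of_lt hn
  have hNM : N.IsSummand ((M.pow _).prod P) :=
    (IsSummand.of_fst (N.powSuccEquiv _)).trans (IsSummand.of_fst (M := (M.pow _).prod P) e)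
  exact (hNM.or_of_isLocalRing (.refl _ _)).elim hN.isSummand_of_isSummand_pow
    fun h => absurd (h.proj hP) hNP

end FGMod

end Power

section PhiZero

variable {R}

theorem FGMod.Proj.injective_of_phiIT_eq_zero [IsArtinianRing Rᵐᵒᵖ]
    {OmK : AddMonoid.End (ITK R)} (hOm : IsSyzygyEnd R OmK) (hφ : ∀ M, phiIT R OmK M = 0)
    {Q : FGMod R} (hQ : Q.Proj) : Module.Injective Rᵐᵒᵖ Q := by
  by_contra hinj
  obtain ⟨E, T, j, g, hT, hj, hjg, hg, hnonsplit⟩ := exists_simple_extension_of_not_injective hinj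
  have hTnonproj : ¬T.Proj := fun hTP =>
    have : Module.Projective Rᵐᵒᵖ T := hTP
    hnonsplit <| ((hjg.split_tfae hj hg).out 0 1).mp (Module.projective_lifting_property g .id hg)
  have hΩ : OmK (ITcls R E - ITcls R T) = 0 := by
    rw [map_sub, hOm.apply_eq_of_extension hQ hj hjg hg, sub_self]
  have hmem : ITcls R E - ITcls R T ∈ ITgen R (E.prod T) :=
    sub_mem (IsSummand.of_fst (.refl _ _)).ITcls_mem_ITgen
      (IsSummand.of_snd (.refl _ _)).ITcls_mem_ITgen
  obtain ⟨n, hn, hET⟩ := isOfFinAddOrder_iff_nsmul_eq_zero.mp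
    (isOfFinAddOrder_of_phiIT_eq_zero (hφ _) hmem hΩ)
  rw [nsmul_sub, sub_eq_zero] at hET
  have hTE : T.IsSummand E := T.indec_of_isSimpleModule.isSummand_of_nsmul_eq hTnonproj hn hET
  rcases hTE.retraction_or_isSummand hj hjg hg with hsplit | hTQ
  · exact hnonsplit hsplit
  · exact hTnonproj (hTQ.proj hQ)

end PhiZero

/-- A right artinian ring `R` is right self-injective iff `ψ(M) = 0`
for every f.g. right `R`-module `M`. -/
theorem selfinjective_iff_psidim_eq_zero (R : Type u) [Ring R] [IsArtinianRing Rᵐᵒᵖ]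
    (OmK : AddMonoid.End (ITK R)) (hOm : IsSyzygyEnd R OmK) :
    Module.Injective Rᵐᵒᵖ Rᵐᵒᵖ ↔ ∀ M : FGMod R, psiIT R OmK M = 0 := by
  constructor
  · intro _ M
    rw [psiIT_eq_phiIT, phiIT_eq_zero_of_injective hOm.injective]
  · intro hψ
    have hφ (M : FGMod R) : phiIT R OmK M = 0 := (Nat.add_eq_zero_iff.mp (hψ M)).1
    have hR : (⟨Rᵐᵒᵖ⟩ : FGMod R).Proj := inferInstanceAs (Module.Projective Rᵐᵒᵖ Rᵐᵒᵖ)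
    exact hR.injective_of_phiIT_eq_zero hOm hφ
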